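/- arXiv:1908.04667 — 3 statements merged into one kernel-verified Lean document; each statement's English description precedes it below -/
import Mathlib

section
/- Let 0 < λ₁ < λ₂ < 2λ₁, κ₁, κ₂ > 0 and θ₁, θ₂ ∈ ℝ. Then there exist σ₁ > 0, σ₂ > 0, ρ ∈ (−1, 0), z₁, z₂ ∈ ℝ and points 0 < r₁ < r₂ < r₃ < r₄ such that, with u_j = σ_j²κ_j²/λ_j, c = ρ(λ₁+λ₂)σ₁σ₂κ₁κ₂/(λ₁λ₂) and w_j = κ_jλ_j(θ_j − z_j) − σ_j²κ_j²/λ_j − ρλ_jσ₁σ₂κ₁κ₂/(λ₁λ₂), the function l(x) := u₂e^{−2λ₂x} + c·e^{−(λ₁+λ₂)x} + w₂e^{−λ₂x} + u₁e^{−2λ₁x} + w₁e^{−λ₁x} satisfies: l(x) > 0 for 0 ≤ x < r₁, l(x) < 0 for r₁ < x < r₂, l(x) > 0 for r₂ < x < r₃, l(x) < 0 for r₃ < x < r₄, l(x) > 0 for x > r₄, and l(rᵢ) = 0 for i = 1, 2, 3, 4. -/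
/-!
Write `d = λ₂ - λ₁`, `p = λ₁ / d` and `s = exp (-d x)`. Then
`exp (λ₁ x) * l x = u₁ s ^ p + c s ^ (p + 1) + u₂ s ^ (p + 2) + w₁ + w₂ s`, and `λ₂ < 2 λ₁` says
`1 < p`. The coefficients `u₁, c, u₂` can be chosen such that the second derivative in `s` is
`s ^ (p - 2) * ((s - 1) ^ 2 - η ^ 2)`: the function is convex, then concave on `[1 - η, 1 + η]`,
then convex. Choose `w₁, w₂` so that it touches zero at `s = 1`; for small `η` it is positive at
`s = 0`, so raising it slightly gives a W-shaped function with four sign changes on `(0, ∞)`.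
Since `u₁, u₂ > 0`, `c < 0` and `c ^ 2 < 4 u₁ u₂`, the coefficients come from some `σ₁, σ₂ > 0`
and `ρ ∈ (-1, 0)`, and a translation in `x`, which preserves these inequalities, makes all four
zeros positive.
-/

open Set Filter

section Crossing

variable {f : ℝ → ℝ} {S : Set ℝ} {a b : ℝ}

lemma exists_crossing_down_of_convexOn (hf : ConvexOn ℝ S f) (hcont : ContinuousOn f S)
    (ha : a ∈ S) (hb : b ∈ S) (hab : a < b) (hfa : 0 < f a) (hfb : f b < 0) :
    ∃ r ∈ Ioo a b, f r = 0 ∧ (∀ x ∈ S, x < r → 0 < f x) ∧ ∀ x, r < x → x ≤ b → f x < 0 := by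
  have hsub : Icc a b ⊆ S := hf.1.ordConnected.out ha hb
  obtain ⟨r, hr, hfr⟩ := intermediate_value_Ioo' hab.le (hcont.mono hsub) ⟨hfb, hfa⟩
  refine ⟨r, hr, hfr, fun x hx hxr ↦ ?_, fun x hrx hxb ↦ ?_⟩
  · have hr_mem : r ∈ openSegment ℝ x b := by
      rw [openSegment_eq_Ioo (hxr.trans hr.2)]
      exact ⟨hxr, hr.2⟩
    exact hfr ▸ hf.lt_left_of_right_lt hx hb hr_mem (hfr.symm ▸ hfb)
  · obtain rfl | hxb := hxb.eq_or_lt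
    · exact hfb
    by_contra! hfx
    have hx_mem : x ∈ openSegment ℝ r b := by
      rw [openSegment_eq_Ioo hr.2]
      exact ⟨hrx, hxb⟩
    have := hf.lt_left_of_right_lt (hsub (Ioo_subset_Icc_self hr)) hb hx_mem (hfb.trans_le hfx)
    linarith

lemma exists_crossing_up_of_convexOn (hf : ConvexOn ℝ S f) (hcont : ContinuousOn f S)
    (ha : a ∈ S) (hb : b ∈ S) (hab : a < b) (hfa : f a < 0) (hfb : 0 < f b) :
    ∃ r ∈ Ioo a b, f r = 0 ∧ (∀ x, a ≤ x → x < r → f x < 0) ∧ ∀ x ∈ S, r < x → 0 < f x := by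
  have hsub : Icc a b ⊆ S := hf.1.ordConnected.out ha hb
  obtain ⟨r, hr, hfr⟩ := intermediate_value_Ioo hab.le (hcont.mono hsub) ⟨hfa, hfb⟩
  refine ⟨r, hr, hfr, fun x hax hxr ↦ ?_, fun x hx hrx ↦ ?_⟩
  · obtain rfl | hax := hax.eq_or_lt
    · exact hfa
    by_contra! hfx
    have hx_mem : x ∈ openSegment ℝ a r := by
      rw [openSegment_eq_Ioo hr.1]
      exact ⟨hax, hxr⟩
    have := hf.lt_right_of_left_lt ha (hsub (Ioo_subset_Icc_self hr)) hx_mem (hfa.trans_le hfx)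
    linarith
  · have hr_mem : r ∈ openSegment ℝ a x := by
      rw [openSegment_eq_Ioo (hr.1.trans hrx)]
      exact ⟨hr.1, hrx⟩
    exact hfr ▸ hf.lt_right_of_left_lt ha hx hr_mem (hfr.symm ▸ hfa)

lemma exists_crossing_up_of_concaveOn (hf : ConcaveOn ℝ S f) (hcont : ContinuousOn f S)
    (ha : a ∈ S) (hb : b ∈ S) (hab : a < b) (hfa : f a < 0) (hfb : 0 < f b) :
    ∃ r ∈ Ioo a b, f r = 0 ∧ (∀ x ∈ S, x < r → f x < 0) ∧ ∀ x, r < x → x ≤ b → 0 < f x := by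
  simpa using exists_crossing_down_of_convexOn hf.neg hcont.neg ha hb hab
    (neg_pos.2 hfa) (neg_neg_iff_pos.2 hfb)

lemma exists_crossing_down_of_concaveOn (hf : ConcaveOn ℝ S f) (hcont : ContinuousOn f S)
    (ha : a ∈ S) (hb : b ∈ S) (hab : a < b) (hfa : 0 < f a) (hfb : f b < 0) :
    ∃ r ∈ Ioo a b, f r = 0 ∧ (∀ x, a ≤ x → x < r → 0 < f x) ∧ ∀ x ∈ S, r < x → f x < 0 := by
  simpa using exists_crossing_up_of_convexOn hf.neg hcont.neg ha hb hab
    (neg_neg_iff_pos.2 hfa) (neg_pos.2 hfb)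

lemma lt_of_strictConcaveOn_of_hasDerivAt_zero {x y : ℝ} (hf : StrictConcaveOn ℝ S f)
    (hx : x ∈ S) (hy : y ∈ S) (hyx : y ≠ x) (hderiv : HasDerivAt f 0 x) : f y < f x := by
  obtain hyx | hxy := hyx.lt_or_gt
  · have hslope := hf.lt_slope_of_hasDerivAt hy hx hyx hderiv
    rw [slope_def_field, lt_div_iff₀ (sub_pos.2 hyx), zero_mul] at hslope
    exact sub_pos.1 hslope
  · have hslope := hf.slope_lt_of_hasDerivAt hx hy hxy hderiv
    rw [slope_def_field, div_lt_iff₀ (sub_pos.2 hxy), zero_mul] at hslope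
    exact sub_neg.1 hslope

end Crossing

/-- On `S` the function `f` has the sign pattern `(+, -, +, -, +)` with sign changes at the zeros
`r₁ < r₂ < r₃ < r₄`. For the derivative of a forward curve this is the hump-dip-hump-dip shape.
The zeros themselves are not required to lie in `S`. -/
structure HasHDHDSignsOn (f : ℝ → ℝ) (S : Set ℝ) (r₁ r₂ r₃ r₄ : ℝ) : Prop where
  lt₁₂ : r₁ < r₂
  lt₂₃ : r₂ < r₃
  lt₃₄ : r₃ < r₄
  zero₁ : f r₁ = 0
  zero₂ : f r₂ = 0
  zero₃ : f r₃ = 0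
  zero₄ : f r₄ = 0
  pos_left : ∀ x ∈ S, x < r₁ → 0 < f x
  neg₁₂ : ∀ x ∈ S, r₁ < x → x < r₂ → f x < 0
  pos₂₃ : ∀ x ∈ S, r₂ < x → x < r₃ → 0 < f x
  neg₃₄ : ∀ x ∈ S, r₃ < x → x < r₄ → f x < 0
  pos_right : ∀ x ∈ S, r₄ < x → 0 < f x

namespace HasHDHDSignsOn

variable {f g w : ℝ → ℝ} {S T : Set ℝ} {r₁ r₂ r₃ r₄ s₁ s₂ s₃ s₄ : ℝ}

lemma mono (h : HasHDHDSignsOn f S r₁ r₂ r₃ r₄) (hTS : T ⊆ S) :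
    HasHDHDSignsOn f T r₁ r₂ r₃ r₄ :=
  { h with
    pos_left := fun x hx ↦ h.pos_left x (hTS hx)
    neg₁₂ := fun x hx ↦ h.neg₁₂ x (hTS hx)
    pos₂₃ := fun x hx ↦ h.pos₂₃ x (hTS hx)
    neg₃₄ := fun x hx ↦ h.neg₃₄ x (hTS hx)
    pos_right := fun x hx ↦ h.pos_right x (hTS hx) }

lemma comp_strictAnti (h : HasHDHDSignsOn f S r₁ r₂ r₃ r₄) (hg : StrictAnti g)
    (hmaps : MapsTo g T S) (h₁ : g s₁ = r₄) (h₂ : g s₂ = r₃) (h₃ : g s₃ = r₂) (h₄ : g s₄ = r₁) :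
    HasHDHDSignsOn (f ∘ g) T s₁ s₂ s₃ s₄ := by
  subst h₁ h₂ h₃ h₄
  exact
    { lt₁₂ := hg.lt_iff_gt.1 h.lt₃₄
      lt₂₃ := hg.lt_iff_gt.1 h.lt₂₃
      lt₃₄ := hg.lt_iff_gt.1 h.lt₁₂
      zero₁ := h.zero₄
      zero₂ := h.zero₃
      zero₃ := h.zero₂
      zero₄ := h.zero₁
      pos_left := fun x hx hx₁ ↦ h.pos_right _ (hmaps hx) (hg hx₁)
      neg₁₂ := fun x hx hx₁ hx₂ ↦ h.neg₃₄ _ (hmaps hx) (hg hx₂) (hg hx₁)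
      pos₂₃ := fun x hx hx₂ hx₃ ↦ h.pos₂₃ _ (hmaps hx) (hg hx₃) (hg hx₂)
      neg₃₄ := fun x hx hx₃ hx₄ ↦ h.neg₁₂ _ (hmaps hx) (hg hx₄) (hg hx₃)
      pos_right := fun x hx hx₄ ↦ h.pos_left _ (hmaps hx) (hg hx₄) }

lemma pos_mul (h : HasHDHDSignsOn f S r₁ r₂ r₃ r₄) (hw : ∀ x ∈ S, 0 < w x) :
    HasHDHDSignsOn (fun x ↦ w x * f x) S r₁ r₂ r₃ r₄ where
  lt₁₂ := h.lt₁₂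
  lt₂₃ := h.lt₂₃
  lt₃₄ := h.lt₃₄
  zero₁ := mul_eq_zero_of_right _ h.zero₁
  zero₂ := mul_eq_zero_of_right _ h.zero₂
  zero₃ := mul_eq_zero_of_right _ h.zero₃
  zero₄ := mul_eq_zero_of_right _ h.zero₄
  pos_left := fun x hx hx₁ ↦ mul_pos (hw x hx) (h.pos_left x hx hx₁)
  neg₁₂ := fun x hx hx₁ hx₂ ↦ mul_neg_of_pos_of_neg (hw x hx) (h.neg₁₂ x hx hx₁ hx₂)
  pos₂₃ := fun x hx hx₂ hx₃ ↦ mul_pos (hw x hx) (h.pos₂₃ x hx hx₂ hx₃)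
  neg₃₄ := fun x hx hx₃ hx₄ ↦ mul_neg_of_pos_of_neg (hw x hx) (h.neg₃₄ x hx hx₃ hx₄)
  pos_right := fun x hx hx₄ ↦ mul_pos (hw x hx) (h.pos_right x hx hx₄)

end HasHDHDSignsOn

section ConvexConcaveConvex

variable {f : ℝ → ℝ} {a b m c d : ℝ}

lemma exists_hasHDHDSignsOn_of_convex_concave_convex (hab : a < b) (hbm : b < m) (hmc : m < c)
    (hcd : c < d) (hcont : ContinuousOn f (Ici a)) (hleft : ConvexOn ℝ (Icc a b) f)
    (hmid : ConcaveOn ℝ (Icc b c) f) (hright : ConvexOn ℝ (Ici c) f)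
    (hfa : 0 < f a) (hfb : f b < 0) (hfm : 0 < f m) (hfc : f c < 0) (hfd : 0 < f d) :
    ∃ r₁ r₂ r₃ r₄, a < r₁ ∧ HasHDHDSignsOn f (Ici a) r₁ r₂ r₃ r₄ := by
  have hm : m ∈ Icc b c := ⟨hbm.le, hmc.le⟩
  have hcont_mid : ContinuousOn f (Icc b c) := hcont.mono fun x hx ↦ hab.le.trans hx.1
  obtain ⟨r₁, hr₁, zero₁, pos₁, neg₁⟩ := exists_crossing_down_of_convexOn hleft
    (hcont.mono Icc_subset_Ici_self) (left_mem_Icc.2 hab.le) (right_mem_Icc.2 hab.le) hab hfa hfb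
  obtain ⟨r₂, hr₂, zero₂, neg₂, pos₂⟩ := exists_crossing_up_of_concaveOn hmid hcont_mid
    (left_mem_Icc.2 (hbm.trans hmc).le) hm hbm hfb hfm
  obtain ⟨r₃, hr₃, zero₃, pos₃, neg₃⟩ := exists_crossing_down_of_concaveOn hmid hcont_mid
    hm (right_mem_Icc.2 (hbm.trans hmc).le) hmc hfm hfc
  obtain ⟨r₄, hr₄, zero₄, neg₄, pos₄⟩ := exists_crossing_up_of_convexOn hright
    (hcont.mono (Ici_subset_Ici.2 (hab.trans (hbm.trans hmc)).le)) self_mem_Ici hcd.le hcd hfc hfd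
  refine ⟨r₁, r₂, r₃, r₄, hr₁.1, hr₁.2.trans hr₂.1, hr₂.2.trans hr₃.1, hr₃.2.trans hr₄.1,
    zero₁, zero₂, zero₃, zero₄, fun x hx hx₁ ↦ pos₁ x ⟨hx, (hx₁.trans hr₁.2).le⟩ hx₁,
    fun x _ hx₁ hx₂ ↦ ?_, fun x _ hx₂ hx₃ ↦ ?_, fun x _ hx₃ hx₄ ↦ ?_,
    fun x _ hx₄ ↦ pos₄ x (hr₄.1.trans hx₄).le hx₄⟩
  · obtain hxb | hbx := le_total x b
    · exact neg₁ x hx₁ hxb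
    · exact neg₂ x ⟨hbx, (hx₂.trans (hr₂.2.trans hmc)).le⟩ hx₂
  · obtain hxm | hmx := le_total x m
    · exact pos₂ x hx₂ hxm
    · exact pos₃ x hmx hx₃
  · obtain hxc | hcx := le_total x c
    · exact neg₃ x ⟨(hbm.trans (hr₃.1.trans hx₃)).le, hxc⟩ hx₃
    · exact neg₄ x hcx hx₄

lemma exists_hasHDHDSignsOn_add_const (hab : a < b) (hbm : b < m) (hmc : m < c)
    (hcont : ContinuousOn f (Ici a)) (hleft : ConvexOn ℝ (Icc a b) f)
    (hmid : StrictConcaveOn ℝ (Icc b c) f) (hright : ConvexOn ℝ (Ici c) f)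
    (hfa : 0 < f a) (hfm : f m = 0) (hderiv : HasDerivAt f 0 m) (htop : Tendsto f atTop atTop) :
    ∃ ε r₁ r₂ r₃ r₄, a < r₁ ∧ HasHDHDSignsOn (fun x ↦ f x + ε) (Ici a) r₁ r₂ r₃ r₄ := by
  have hbc : b ≤ c := (hbm.trans hmc).le
  have hm : m ∈ Icc b c := ⟨hbm.le, hmc.le⟩
  have hfb : f b < 0 :=
    hfm ▸ lt_of_strictConcaveOn_of_hasDerivAt_zero hmid hm (left_mem_Icc.2 hbc) hbm.ne hderiv
  have hfc : f c < 0 :=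
    hfm ▸ lt_of_strictConcaveOn_of_hasDerivAt_zero hmid hm (right_mem_Icc.2 hbc) hmc.ne' hderiv
  obtain ⟨ε, hε, hε_lt⟩ := exists_between (lt_min (neg_pos.2 hfb) (neg_pos.2 hfc))
  obtain ⟨hεb, hεc⟩ := lt_min_iff.1 hε_lt
  obtain ⟨d, hfd, hcd⟩ := ((htop.eventually_gt_atTop 0).and (eventually_gt_atTop c)).exists
  refine ⟨ε, exists_hasHDHDSignsOn_of_convex_concave_convex hab hbm hmc hcd
    (hcont.add continuousOn_const) (hleft.add_const ε) (hmid.concaveOn.add_const ε)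
    (hright.add_const ε) ?_ ?_ ?_ ?_ ?_⟩ <;> linarith

end ConvexConcaveConvex

/-- The derivative `l` of the two-factor Vasicek forward curve, up to its parametrization by
volatilities, correlation and state. -/
noncomputable def forwardSlope (lam₁ lam₂ u₁ u₂ c w₁ w₂ x : ℝ) : ℝ :=
  u₂ * Real.exp (-(2 * lam₂ * x)) + c * Real.exp (-((lam₁ + lam₂) * x)) +
    w₂ * Real.exp (-(lam₂ * x)) + u₁ * Real.exp (-(2 * lam₁ * x)) + w₁ * Real.exp (-(lam₁ * x))

/-- The derivative of the forward curve in the variable `s = exp (-(λ₂ - λ₁) x)` and divided by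
`exp (-λ₁ x)`, with `p = λ₁ / (λ₂ - λ₁)`; the coefficients are named as in `forwardSlope`. -/
noncomputable def slopeProfile (p u₁ u₂ c w₁ w₂ s : ℝ) : ℝ :=
  u₁ * s ^ p + c * s ^ (p + 1) + u₂ * s ^ (p + 2) + w₁ + w₂ * s

section SlopeProfile

variable {p u₁ u₂ c w₁ w₂ s : ℝ}

lemma hasDerivAt_slopeProfile (hs : s ≠ 0) :
    HasDerivAt (slopeProfile p u₁ u₂ c w₁ w₂)
      (slopeProfile (p - 1) (p * u₁) ((p + 2) * u₂) ((p + 1) * c) w₂ 0 s) s := by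
  have hpow (q : ℝ) : HasDerivAt (fun x : ℝ ↦ x ^ q) (q * s ^ (q - 1)) s :=
    Real.hasDerivAt_rpow_const (Or.inl hs)
  have h := (((((hpow p).const_mul u₁).add ((hpow (p + 1)).const_mul c)).add
    ((hpow (p + 2)).const_mul u₂)).add_const w₁).add ((hasDerivAt_id s).const_mul w₂)
  refine h.congr_deriv ?_
  rw [slopeProfile, show p + 1 - 1 = p - 1 + 1 by ring, show p + 2 - 1 = p - 1 + 2 by ring]
  ring

lemma continuous_slopeProfile (hp : 0 ≤ p) : Continuous (slopeProfile p u₁ u₂ c w₁ w₂) := by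
  have hpow (q : ℝ) (hq : 0 ≤ q) : Continuous fun x : ℝ ↦ x ^ q := Real.continuous_rpow_const hq
  exact (((((hpow p hp).const_mul u₁).add ((hpow (p + 1) (by positivity)).const_mul c)).add
    ((hpow (p + 2) (by positivity)).const_mul u₂)).add_const w₁).add (continuous_id.const_mul w₂)

lemma slopeProfile_eq_rpow_mul (hs : 0 < s) :
    slopeProfile p u₁ u₂ c w₁ w₂ s = s ^ p * (u₁ + c * s + u₂ * s ^ 2) + w₁ + w₂ * s := by
  rw [slopeProfile, Real.rpow_add_one hs.ne', Real.rpow_add hs, Real.rpow_two]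
  ring

lemma tendsto_slopeProfile_atTop (hp : 1 < p) (hu₂ : 0 < u₂) :
    Tendsto (slopeProfile p u₁ u₂ c w₁ w₂) atTop atTop := by
  have hlin : Tendsto (fun s : ℝ ↦ c + u₂ * s) atTop atTop :=
    tendsto_atTop_add_const_left _ _ (tendsto_id.const_mul_atTop hu₂)
  have hquad : Tendsto (fun s : ℝ ↦ u₁ + s * (c + u₂ * s)) atTop atTop :=
    tendsto_atTop_add_const_left _ _ (tendsto_id.atTop_mul_atTop₀ hlin)
  have hpow : Tendsto (fun s : ℝ ↦ s ^ (p - 1) * (u₁ + s * (c + u₂ * s)) + w₂) atTop atTop :=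
    tendsto_atTop_add_const_right _ _
      ((tendsto_rpow_atTop (sub_pos.2 hp)).atTop_mul_atTop₀ hquad)
  refine (tendsto_atTop_add_const_right _ w₁ (tendsto_id.atTop_mul_atTop₀ hpow)).congr' ?_
  filter_upwards [eventually_gt_atTop 0] with s hs
  have hsplit : s ^ p = s ^ (p - 1) * s := by
    rw [← Real.rpow_add_one hs.ne', sub_add_cancel]
  rw [slopeProfile_eq_rpow_mul hs, hsplit, id_eq]
  ring

end SlopeProfile

/-- The slope profile whose second derivative is `s ^ (p - 2) * ((s - 1) ^ 2 - η ^ 2)` and which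
has a critical zero at `s = 1`: a W-shaped function with inflection points `1 ± η`. -/
noncomputable def doubleWell (p η : ℝ) : ℝ → ℝ :=
  slopeProfile p ((1 - η ^ 2) / ((p - 1) * p)) (1 / ((p + 1) * (p + 2))) (-2 / (p * (p + 1)))
    (2 / (p * (p + 1) * (p + 2)) - η ^ 2 / p)
    (-((1 - η ^ 2) / (p - 1) - 2 / p + 1 / (p + 1)))

section DoubleWell

variable {p η s : ℝ}

lemma doubleWell_zero (hp : 0 < p) :
    doubleWell p η 0 = 2 / (p * (p + 1) * (p + 2)) - η ^ 2 / p := by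
  simp [doubleWell, slopeProfile, Real.zero_rpow, hp.ne', (by positivity : p + 1 ≠ 0),
    (by positivity : p + 2 ≠ 0)]

lemma doubleWell_one (hp : 1 < p) : doubleWell p η 1 = 0 := by
  have : p - 1 ≠ 0 := by linarith
  simp only [doubleWell, slopeProfile, Real.one_rpow]
  field_simp
  ring

/-- The derivative of `doubleWell`. -/
noncomputable def doubleWellDeriv (p η : ℝ) : ℝ → ℝ :=
  slopeProfile (p - 1) ((1 - η ^ 2) / (p - 1)) (1 / (p + 1)) (-2 / p)
    (-((1 - η ^ 2) / (p - 1) - 2 / p + 1 / (p + 1))) 0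

lemma hasDerivAt_doubleWell (hp : 1 < p) (hs : s ≠ 0) :
    HasDerivAt (doubleWell p η) (doubleWellDeriv p η s) s := by
  have : p - 1 ≠ 0 := by linarith
  refine (hasDerivAt_slopeProfile hs).congr_deriv ?_
  rw [doubleWellDeriv]
  congr 1 <;> field_simp

lemma doubleWellDeriv_one : doubleWellDeriv p η 1 = 0 := by
  simp only [doubleWellDeriv, slopeProfile, Real.one_rpow]
  ring

lemma hasDerivAt_doubleWellDeriv (hp : 1 < p) (hs : 0 < s) :
    HasDerivAt (doubleWellDeriv p η) (s ^ (p - 2) * ((s - 1) ^ 2 - η ^ 2)) s := by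
  have : p - 1 ≠ 0 := by linarith
  refine (hasDerivAt_slopeProfile hs.ne').congr_deriv ?_
  rw [slopeProfile_eq_rpow_mul hs, show p - 1 - 1 = p - 2 by ring, sub_add_cancel,
    show p - 1 + 2 = p + 1 by ring]
  field_simp
  ring

lemma convexOn_doubleWell {I : Set ℝ} (hp : 1 < p) (hI : Convex ℝ I)
    (hpos : ∀ s ∈ interior I, 0 < s) (hfar : ∀ s ∈ interior I, η ^ 2 ≤ (s - 1) ^ 2) :
    ConvexOn ℝ I (doubleWell p η) :=
  convexOn_of_hasDerivWithinAt2_nonneg hI (continuous_slopeProfile (by linarith)).continuousOn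
    (fun s hs ↦ (hasDerivAt_doubleWell hp (hpos s hs).ne').hasDerivWithinAt)
    (fun s hs ↦ (hasDerivAt_doubleWellDeriv hp (hpos s hs)).hasDerivWithinAt)
    fun s hs ↦ mul_nonneg (Real.rpow_nonneg (hpos s hs).le _) (sub_nonneg.2 (hfar s hs))

lemma strictConcaveOn_doubleWell {I : Set ℝ} (hp : 1 < p) (hI : Convex ℝ I)
    (hpos : ∀ s ∈ interior I, 0 < s) (hnear : ∀ s ∈ interior I, (s - 1) ^ 2 < η ^ 2) :
    StrictConcaveOn ℝ I (doubleWell p η) := by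
  refine strictConcaveOn_of_deriv2_neg hI
    (continuous_slopeProfile (by linarith)).continuousOn fun s hs ↦ ?_
  have hderiv : deriv (doubleWell p η) =ᶠ[nhds s] doubleWellDeriv p η := by
    filter_upwards [eventually_gt_nhds (hpos s hs)] with x hx
    exact (hasDerivAt_doubleWell hp hx.ne').deriv
  calc deriv^[2] (doubleWell p η) s = deriv (doubleWellDeriv p η) s := hderiv.deriv_eq
    _ = s ^ (p - 2) * ((s - 1) ^ 2 - η ^ 2) := (hasDerivAt_doubleWellDeriv hp (hpos s hs)).deriv
    _ < 0 := mul_neg_of_pos_of_neg (Real.rpow_pos_of_pos (hpos s hs) _) (sub_neg.2 (hnear s hs))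

lemma sq_lt_one_of_mul_lt_two (hp : 1 < p) (hη : η ^ 2 * ((p + 1) * (p + 2)) < 2) :
    η ^ 2 < 1 := by
  have hprod : 2 < (p + 1) * (p + 2) := by nlinarith
  nlinarith

lemma exists_doubleWell_add_const_hasHDHDSignsOn (hp : 1 < p) (hη : 0 < η)
    (hη_small : η ^ 2 * ((p + 1) * (p + 2)) < 2) :
    ∃ ε r₁ r₂ r₃ r₄, 0 < r₁ ∧
      HasHDHDSignsOn (fun s ↦ doubleWell p η s + ε) (Ici 0) r₁ r₂ r₃ r₄ := by
  have hη1 : η < 1 := (sq_lt_one_iff₀ hη.le).1 (sq_lt_one_of_mul_lt_two hp hη_small)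
  have hzero : 0 < doubleWell p η 0 := by
    rw [doubleWell_zero (by linarith), sub_pos, div_lt_div_iff₀ (by positivity) (by positivity)]
    calc η ^ 2 * (p * (p + 1) * (p + 2)) = η ^ 2 * ((p + 1) * (p + 2)) * p := by ring
      _ < 2 * p := by gcongr
  have hleft : ConvexOn ℝ (Icc 0 (1 - η)) (doubleWell p η) := by
    refine convexOn_doubleWell hp (convex_Icc _ _) ?_ ?_ <;> rw [interior_Icc] <;> intro s hs
    · exact hs.1
    · nlinarith [hs.2]
  have hmid : StrictConcaveOn ℝ (Icc (1 - η) (1 + η)) (doubleWell p η) := by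
    refine strictConcaveOn_doubleWell hp (convex_Icc _ _) ?_ ?_ <;> rw [interior_Icc] <;>
      intro s hs
    · linarith [hs.1]
    · nlinarith [hs.1, hs.2]
  have hright : ConvexOn ℝ (Ici (1 + η)) (doubleWell p η) := by
    refine convexOn_doubleWell hp (convex_Ici _) ?_ ?_ <;> rw [interior_Ici] <;> intro s hs <;>
      rw [mem_Ioi] at hs
    · linarith
    · nlinarith
  have hderiv : HasDerivAt (doubleWell p η) 0 1 :=
    doubleWellDeriv_one (p := p) (η := η) ▸ hasDerivAt_doubleWell hp one_ne_zero
  exact exists_hasHDHDSignsOn_add_const (by linarith) (by linarith) (by linarith)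
    (continuous_slopeProfile (by linarith)).continuousOn hleft hmid hright hzero
    (doubleWell_one hp) hderiv (tendsto_slopeProfile_atTop hp (by positivity))

lemma exists_slopeProfile_hasHDHDSignsOn (hp : 1 < p) :
    ∃ u₁ u₂ c w₁ w₂ r₁ r₂ r₃ r₄ : ℝ, 0 < u₁ ∧ 0 < u₂ ∧ c < 0 ∧ c ^ 2 < 4 * u₁ * u₂ ∧ 0 < r₁ ∧
      HasHDHDSignsOn (slopeProfile p u₁ u₂ c w₁ w₂) (Ioi 0) r₁ r₂ r₃ r₄ := by
  have hp1 : 0 < p - 1 := sub_pos.2 hp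
  obtain ⟨η, hη, hη_small⟩ : ∃ η : ℝ, 0 < η ∧ η ^ 2 * ((p + 1) * (p + 2)) < 2 := by
    refine ⟨1 / (p + 2), by positivity, ?_⟩
    field_simp
    linarith
  obtain ⟨ε, r₁, r₂, r₃, r₄, hr₁, h⟩ := exists_doubleWell_add_const_hasHDHDSignsOn hp hη hη_small
  have hη1 : 0 < 1 - η ^ 2 := sub_pos.2 (sq_lt_one_of_mul_lt_two hp hη_small)
  refine ⟨(1 - η ^ 2) / ((p - 1) * p), 1 / ((p + 1) * (p + 2)), -2 / (p * (p + 1)),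
    2 / (p * (p + 1) * (p + 2)) - η ^ 2 / p + ε,
    -((1 - η ^ 2) / (p - 1) - 2 / p + 1 / (p + 1)), r₁, r₂, r₃, r₄, by positivity, by positivity,
    div_neg_of_neg_of_pos (by norm_num) (by positivity), ?_, hr₁, ?_⟩
  · have hdisc : (p - 1) * (p + 2) < (1 - η ^ 2) * (p * (p + 1)) := by nlinarith [sq_nonneg η]
    field_simp
    nlinarith
  · convert h.mono Ioi_subset_Ici_self using 2 with s
    simp only [doubleWell, slopeProfile]
    ring

end DoubleWell

section ForwardSlope

variable {lam₁ lam₂ u₁ u₂ c w₁ w₂ : ℝ}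

lemma forwardSlope_eq_exp_mul_slopeProfile (h : lam₁ ≠ lam₂) (x : ℝ) :
    forwardSlope lam₁ lam₂ u₁ u₂ c w₁ w₂ x = Real.exp (-(lam₁ * x)) *
      slopeProfile (lam₁ / (lam₂ - lam₁)) u₁ u₂ c w₁ w₂ (Real.exp (-((lam₂ - lam₁) * x))) := by
  have hd : lam₂ - lam₁ ≠ 0 := sub_ne_zero.2 h.symm
  have hpow : Real.exp (-((lam₂ - lam₁) * x)) ^ (lam₁ / (lam₂ - lam₁)) =
      Real.exp (-(lam₁ * x)) := by
    rw [← Real.exp_mul]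
    congr 1
    field_simp
  rw [slopeProfile_eq_rpow_mul (Real.exp_pos _), hpow, forwardSlope,
    show -(2 * lam₂ * x) = -(lam₁ * x) + -(lam₁ * x) + -((lam₂ - lam₁) * x) +
      -((lam₂ - lam₁) * x) by ring,
    show -((lam₁ + lam₂) * x) = -(lam₁ * x) + -(lam₁ * x) + -((lam₂ - lam₁) * x) by ring,
    show -(lam₂ * x) = -(lam₁ * x) + -((lam₂ - lam₁) * x) by ring,
    show -(2 * lam₁ * x) = -(lam₁ * x) + -(lam₁ * x) by ring]
  simp only [Real.exp_add]
  ring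

lemma forwardSlope_sub (x t : ℝ) :
    forwardSlope lam₁ lam₂ u₁ u₂ c w₁ w₂ (x - t) =
      forwardSlope lam₁ lam₂ (u₁ * Real.exp (2 * lam₁ * t)) (u₂ * Real.exp (2 * lam₂ * t))
        (c * Real.exp ((lam₁ + lam₂) * t)) (w₁ * Real.exp (lam₁ * t)) (w₂ * Real.exp (lam₂ * t))
        x := by
  have hexp (q : ℝ) : Real.exp (-(q * (x - t))) = Real.exp (q * t) * Real.exp (-(q * x)) := by
    rw [← Real.exp_add]
    ring_nf
  simp only [forwardSlope, hexp]
  ring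

lemma HasHDHDSignsOn.forwardSlope_of_slopeProfile {a₁ a₂ a₃ a₄ : ℝ} (hlam : lam₁ < lam₂)
    (ha₁ : 0 < a₁)
    (h : HasHDHDSignsOn (slopeProfile (lam₁ / (lam₂ - lam₁)) u₁ u₂ c w₁ w₂) (Ioi 0)
      a₁ a₂ a₃ a₄) (t : ℝ) :
    HasHDHDSignsOn (fun x ↦ forwardSlope lam₁ lam₂ u₁ u₂ c w₁ w₂ (x - t)) univ
      (t - Real.log a₄ / (lam₂ - lam₁)) (t - Real.log a₃ / (lam₂ - lam₁))
      (t - Real.log a₂ / (lam₂ - lam₁)) (t - Real.log a₁ / (lam₂ - lam₁)) := by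
  have hd : 0 < lam₂ - lam₁ := sub_pos.2 hlam
  have ha₂ : 0 < a₂ := ha₁.trans h.lt₁₂
  have ha₃ : 0 < a₃ := ha₂.trans h.lt₂₃
  have ha₄ : 0 < a₄ := ha₃.trans h.lt₃₄
  have hanti : StrictAnti fun x : ℝ ↦ Real.exp (-((lam₂ - lam₁) * (x - t))) := fun x y hxy ↦
    Real.exp_lt_exp.2 (neg_lt_neg (mul_lt_mul_of_pos_left (sub_lt_sub_right hxy t) hd))
  have hinv {a : ℝ} (ha : 0 < a) :
      Real.exp (-((lam₂ - lam₁) * (t - Real.log a / (lam₂ - lam₁) - t))) = a := by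
    rw [sub_sub_cancel_left, mul_neg, neg_neg, mul_div_cancel₀ _ hd.ne', Real.exp_log ha]
  have hcomp := h.comp_strictAnti (T := univ) hanti (fun x _ ↦ Real.exp_pos _)
    (hinv ha₄) (hinv ha₃) (hinv ha₂) (hinv ha₁)
  simpa only [forwardSlope_eq_exp_mul_slopeProfile hlam.ne, Function.comp_def] using
    hcomp.pos_mul (w := fun x ↦ Real.exp (-(lam₁ * (x - t)))) fun x _ ↦ Real.exp_pos _

lemma exists_forwardSlope_hasHDHDSignsOn (hlam : lam₁ < lam₂) (hprox : lam₂ < 2 * lam₁) :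
    ∃ u₁ u₂ c w₁ w₂ r₁ r₂ r₃ r₄ : ℝ, 0 < u₁ ∧ 0 < u₂ ∧ c < 0 ∧ c ^ 2 < 4 * u₁ * u₂ ∧ 0 < r₁ ∧
      HasHDHDSignsOn (forwardSlope lam₁ lam₂ u₁ u₂ c w₁ w₂) univ r₁ r₂ r₃ r₄ := by
  have hp : 1 < lam₁ / (lam₂ - lam₁) := by
    rw [one_lt_div (sub_pos.2 hlam)]
    linarith
  obtain ⟨u₁, u₂, c, w₁, w₂, a₁, a₂, a₃, a₄, hu₁, hu₂, hc, hdisc, ha₁, h⟩ :=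
    exists_slopeProfile_hasHDHDSignsOn hp
  obtain ⟨t, ht⟩ := exists_gt (Real.log a₄ / (lam₂ - lam₁))
  have hshift := h.forwardSlope_of_slopeProfile hlam ha₁ t
  simp only [forwardSlope_sub] at hshift
  refine ⟨_, _, _, _, _, _, _, _, _, by positivity, by positivity,
    mul_neg_of_neg_of_pos hc (Real.exp_pos _), ?_, sub_pos.2 ht, hshift⟩
  have hexp : Real.exp ((lam₁ + lam₂) * t) ^ 2 =
      Real.exp (2 * lam₁ * t) * Real.exp (2 * lam₂ * t) := by
    rw [← Real.exp_add, ← Real.exp_nat_mul]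
    ring_nf
  calc (c * Real.exp ((lam₁ + lam₂) * t)) ^ 2
      = c ^ 2 * (Real.exp (2 * lam₁ * t) * Real.exp (2 * lam₂ * t)) := by rw [mul_pow, hexp]
    _ < 4 * u₁ * u₂ * (Real.exp (2 * lam₁ * t) * Real.exp (2 * lam₂ * t)) := by gcongr
    _ = _ := by ring

end ForwardSlope

section Parameters

variable {lam₁ lam₂ kap₁ kap₂ u₁ u₂ c : ℝ}

lemma exists_volatility_eq {lam kap u : ℝ} (hlam : 0 < lam) (hkap : 0 < kap) (hu : 0 < u) :
    ∃ sig : ℝ, 0 < sig ∧ u = sig ^ 2 * kap ^ 2 / lam := by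
  refine ⟨√(lam * u) / kap, by positivity, ?_⟩
  rw [div_pow, Real.sq_sqrt (by positivity)]
  field_simp

lemma exists_correlation_eq {v₁ v₂ : ℝ} (hlam₁ : 0 < lam₁) (hlam₂ : 0 < lam₂) (hv₁ : 0 < v₁)
    (hv₂ : 0 < v₂) (hc : c < 0) (hdisc : c ^ 2 < 4 * (v₁ ^ 2 / lam₁) * (v₂ ^ 2 / lam₂)) :
    ∃ rho : ℝ, -1 < rho ∧ rho < 0 ∧ c = rho * (lam₁ + lam₂) * (v₁ * v₂) / (lam₁ * lam₂) := by
  have hden : 0 < (lam₁ + lam₂) * (v₁ * v₂) := by positivity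
  refine ⟨c * (lam₁ * lam₂) / ((lam₁ + lam₂) * (v₁ * v₂)), ?_,
    div_neg_of_neg_of_pos (mul_neg_of_neg_of_pos hc (by positivity)) hden, by field_simp⟩
  have hsq : (c * (lam₁ * lam₂)) ^ 2 < ((lam₁ + lam₂) * (v₁ * v₂)) ^ 2 :=
    calc (c * (lam₁ * lam₂)) ^ 2 = c ^ 2 * (lam₁ * lam₂) ^ 2 := mul_pow _ _ _
      _ < 4 * (v₁ ^ 2 / lam₁) * (v₂ ^ 2 / lam₂) * (lam₁ * lam₂) ^ 2 := by gcongr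
      _ = 4 * lam₁ * lam₂ * (v₁ * v₂) ^ 2 := by field_simp
      _ ≤ (lam₁ + lam₂) ^ 2 * (v₁ * v₂) ^ 2 := by
        gcongr
        exact four_mul_le_sq_add lam₁ lam₂
      _ = ((lam₁ + lam₂) * (v₁ * v₂)) ^ 2 := (mul_pow _ _ _).symm
  rw [lt_div_iff₀ hden, neg_one_mul]
  exact (abs_lt_of_sq_lt_sq' hsq hden.le).1

lemma exists_volatilities_correlation_eq (hlam₁ : 0 < lam₁) (hlam₂ : 0 < lam₂) (hkap₁ : 0 < kap₁)
    (hkap₂ : 0 < kap₂) (hu₁ : 0 < u₁) (hu₂ : 0 < u₂) (hc : c < 0)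
    (hdisc : c ^ 2 < 4 * u₁ * u₂) :
    ∃ sig₁ sig₂ rho : ℝ, 0 < sig₁ ∧ 0 < sig₂ ∧ -1 < rho ∧ rho < 0 ∧
      u₁ = sig₁ ^ 2 * kap₁ ^ 2 / lam₁ ∧ u₂ = sig₂ ^ 2 * kap₂ ^ 2 / lam₂ ∧
      c = rho * (lam₁ + lam₂) * sig₁ * sig₂ * kap₁ * kap₂ / (lam₁ * lam₂) := by
  obtain ⟨sig₁, hsig₁, rfl⟩ := exists_volatility_eq hlam₁ hkap₁ hu₁
  obtain ⟨sig₂, hsig₂, rfl⟩ := exists_volatility_eq hlam₂ hkap₂ hu₂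
  rw [← mul_pow, ← mul_pow] at hdisc
  obtain ⟨rho, hrho, hrho_neg, rfl⟩ := exists_correlation_eq hlam₁ hlam₂ (mul_pos hsig₁ hkap₁)
    (mul_pos hsig₂ hkap₂) hc hdisc
  exact ⟨sig₁, sig₂, rho, hsig₁, hsig₂, hrho, hrho_neg, rfl, rfl, by ring⟩

lemma exists_state_eq {a : ℝ} (ha : a ≠ 0) (th A B w : ℝ) : ∃ z, w = a * (th - z) - A - B :=
  ⟨th - (w + A + B) / a, by field_simp; ring⟩

end Parameters

/-- In the scale-proximal case `λ₁ < λ₂ < 2λ₁`, the hump-dip-hump-dip shape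
`HDHD` of the forward curve is attainable with strictly negative correlation:
there are volatilities `σ₁, σ₂ > 0`, a correlation `ρ ∈ (−1,0)`, a state
`(z₁, z₂)` and points `0 < r₁ < r₂ < r₃ < r₄` such that the forward-curve
derivative `l` has sign pattern `(+, −, +, −, +)` with zeros at the `rᵢ`. -/
theorem HDHD_attainable (lam1 lam2 kap1 kap2 th1 th2 : ℝ)
    (h1 : 0 < lam1) (h2 : lam1 < lam2) (h3 : lam2 < 2 * lam1)
    (hkap1 : 0 < kap1) (hkap2 : 0 < kap2) :
    ∃ sig1 sig2 rho z1 z2 r1 r2 r3 r4 : ℝ,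
      0 < sig1 ∧ 0 < sig2 ∧ -1 < rho ∧ rho < 0 ∧
      0 < r1 ∧ r1 < r2 ∧ r2 < r3 ∧ r3 < r4 ∧
      ∃ u1 u2 c w1 w2 : ℝ,
        u1 = sig1 ^ 2 * kap1 ^ 2 / lam1 ∧
        u2 = sig2 ^ 2 * kap2 ^ 2 / lam2 ∧
        c = rho * (lam1 + lam2) * sig1 * sig2 * kap1 * kap2 / (lam1 * lam2) ∧
        w1 = kap1 * lam1 * (th1 - z1) - sig1 ^ 2 * kap1 ^ 2 / lam1 -
          rho * lam1 * sig1 * sig2 * kap1 * kap2 / (lam1 * lam2) ∧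
        w2 = kap2 * lam2 * (th2 - z2) - sig2 ^ 2 * kap2 ^ 2 / lam2 -
          rho * lam2 * sig1 * sig2 * kap1 * kap2 / (lam1 * lam2) ∧
        ∃ l : ℝ → ℝ,
          (∀ x : ℝ, l x = u2 * Real.exp (-(2 * lam2 * x)) +
            c * Real.exp (-((lam1 + lam2) * x)) + w2 * Real.exp (-(lam2 * x)) +
            u1 * Real.exp (-(2 * lam1 * x)) + w1 * Real.exp (-(lam1 * x))) ∧
          (∀ x : ℝ, 0 ≤ x → x < r1 → 0 < l x) ∧
          (∀ x : ℝ, r1 < x → x < r2 → l x < 0) ∧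
          (∀ x : ℝ, r2 < x → x < r3 → 0 < l x) ∧
          (∀ x : ℝ, r3 < x → x < r4 → l x < 0) ∧
          (∀ x : ℝ, r4 < x → 0 < l x) ∧
          l r1 = 0 ∧ l r2 = 0 ∧ l r3 = 0 ∧ l r4 = 0 := by
  obtain ⟨u1, u2, c, w1, w2, r1, r2, r3, r4, hu1, hu2, hc, hdisc, hr1, h⟩ :=
    exists_forwardSlope_hasHDHDSignsOn h2 h3
  have hlam2 : 0 < lam2 := h1.trans h2
  obtain ⟨sig1, sig2, rho, hsig1, hsig2, hrho, hrho_neg, hu1_eq, hu2_eq, hc_eq⟩ :=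
    exists_volatilities_correlation_eq h1 hlam2 hkap1 hkap2 hu1 hu2 hc hdisc
  obtain ⟨z1, hz1⟩ := exists_state_eq (mul_pos hkap1 h1).ne' th1 (sig1 ^ 2 * kap1 ^ 2 / lam1)
    (rho * lam1 * sig1 * sig2 * kap1 * kap2 / (lam1 * lam2)) w1
  obtain ⟨z2, hz2⟩ := exists_state_eq (mul_pos hkap2 hlam2).ne' th2 (sig2 ^ 2 * kap2 ^ 2 / lam2)
    (rho * lam2 * sig1 * sig2 * kap1 * kap2 / (lam1 * lam2)) w2
  exact ⟨sig1, sig2, rho, z1, z2, r1, r2, r3, r4, hsig1, hsig2, hrho, hrho_neg,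
    hr1, h.lt₁₂, h.lt₂₃, h.lt₃₄, u1, u2, c, w1, w2, hu1_eq, hu2_eq, hc_eq, hz1, hz2,
    forwardSlope lam1 lam2 u1 u2 c w1 w2, fun _ ↦ rfl,
    fun x _ ↦ h.pos_left x (mem_univ x), fun x ↦ h.neg₁₂ x (mem_univ x),
    fun x ↦ h.pos₂₃ x (mem_univ x), fun x ↦ h.neg₃₄ x (mem_univ x),
    fun x ↦ h.pos_right x (mem_univ x), h.zero₁, h.zero₂, h.zero₃, h.zero₄⟩
end

section
/- Let 0 < λ₁ < λ₂, κ₁, κ₂ > 0 and θ₁, θ₂ ∈ ℝ, and let A₁ > 0, A₂ > 0 and C, W₁, W₂ ∈ ℝ be given. Then there exists (σ₁, σ₂, ρ, z₁, z₂) ∈ [0,∞) × [0,∞) × [−1,1] × ℝ × ℝ satisfying the system σ₁²κ₁²/λ₁ = A₁, σ₂²κ₂²/λ₂ = A₂, ρ(λ₁+λ₂)σ₁σ₂κ₁κ₂/(λ₁λ₂) = C, κ₁λ₁(θ₁ − z₁) − σ₁²κ₁²/λ₁ − ρλ₁σ₁σ₂κ₁κ₂/(λ₁λ₂) = W₁,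 and κ₂λ₂(θ₂ − z₂) − σ₂²κ₂²/λ₂ − ρλ₂σ₁σ₂κ₁κ₂/(λ₁λ₂) = W₂, if and only if (√(λ₁λ₂)/(λ₁+λ₂))·C/√(A₁·A₂) lies in the interval [−1, 1]. -/
/-!
The first two equations fix `|σ₁σ₂κ₁κ₂| = √(λ₁λ₂) √(A₁A₂)`. Substituted into the cross-term
equation, this turns the normalized coefficient `(√(λ₁λ₂)/(λ₁+λ₂))·C/√(A₁A₂)` into `± ρ`, so an
admissible `ρ` exists precisely when that coefficient lies in `[-1, 1]`. The states `z₁, z₂` occur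
only in the last two equations, each of which is affine in its own state and hence never an
obstruction.
-/

theorem exists_nonneg_sq_mul_sq_div_eq {lam kap A : ℝ} (hlam : lam ≠ 0) (hkap : kap ≠ 0)
    (hA : 0 ≤ lam * A) :
    ∃ sig : ℝ, 0 ≤ sig ∧ sig ^ 2 * kap ^ 2 / lam = A := by
  refine ⟨√(lam * A) / |kap|, by positivity, ?_⟩
  rw [div_pow, Real.sq_sqrt hA, sq_abs, div_mul_cancel₀ _ (pow_ne_zero 2 hkap),
    mul_div_cancel_left₀ _ hlam]

theorem exists_mul_sub_sub_sub_eq {K : Type*} [Field K] {c : K} (hc : c ≠ 0) (th a b W : K) :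
    ∃ z : K, c * (th - z) - a - b = W :=
  ⟨th - (W + a + b) / c, by rw [sub_sub_cancel, mul_div_cancel₀ _ hc]; ring⟩

theorem exists_mem_Icc_mul_eq_iff {R : Type*} [Ring R] [LinearOrder R] [IsOrderedRing R]
    {q r : R} (hq : |q| = 1) :
    (∃ x ∈ Set.Icc (-1 : R) 1, x * q = r) ↔ r ∈ Set.Icc (-1 : R) 1 := by
  have hqq : q * q = 1 := by rw [← abs_mul_abs_self, hq, one_mul]
  simp only [Set.mem_Icc, ← abs_le]
  constructor
  · rintro ⟨x, hx, rfl⟩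
    rwa [abs_mul, hq, mul_one]
  · intro hr
    exact ⟨r * q, by rwa [abs_mul, hq, mul_one], by rw [mul_assoc, hqq, mul_one]⟩

section CrossTerm

variable {lam1 lam2 kap1 kap2 sig1 sig2 A1 A2 : ℝ}

theorem abs_volatility_mul_eq_sqrt_mul_sqrt (hlam : 0 < lam1 * lam2)
    (h1 : sig1 ^ 2 * kap1 ^ 2 / lam1 = A1) (h2 : sig2 ^ 2 * kap2 ^ 2 / lam2 = A2) :
    |sig1 * sig2 * kap1 * kap2| = √(lam1 * lam2) * √(A1 * A2) := by
  rw [div_eq_iff (left_ne_zero_of_mul hlam.ne')] at h1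
  rw [div_eq_iff (right_ne_zero_of_mul hlam.ne')] at h2
  have hsq : (sig1 * sig2 * kap1 * kap2) ^ 2 = lam1 * lam2 * (A1 * A2) := by
    calc (sig1 * sig2 * kap1 * kap2) ^ 2
        = (sig1 ^ 2 * kap1 ^ 2) * (sig2 ^ 2 * kap2 ^ 2) := by ring
      _ = lam1 * lam2 * (A1 * A2) := by rw [h1, h2]; ring
  rw [← Real.sqrt_sq_eq_abs, hsq, Real.sqrt_mul hlam.le]

theorem cross_term_eq_iff (hlam : 0 < lam1 * lam2) (hA : 0 < A1 * A2) (rho p C : ℝ) :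
    rho * (lam1 + lam2) * p / (lam1 * lam2) = C ↔
      rho * (p / (√(lam1 * lam2) * √(A1 * A2))) =
        √(lam1 * lam2) / (lam1 + lam2) * C / √(A1 * A2) := by
  have hsum : lam1 + lam2 ≠ 0 := fun h => by
    rw [eq_neg_of_add_eq_zero_right h] at hlam
    linarith [mul_self_nonneg lam1]
  have hs : √(lam1 * lam2) ≠ 0 := (Real.sqrt_pos.2 hlam).ne'
  have ht : √(A1 * A2) ≠ 0 := (Real.sqrt_pos.2 hA).ne'
  rw [div_eq_iff hlam.ne']
  field_simp
  rw [Real.sq_sqrt hlam.le, mul_comm C]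

theorem exists_correlation_iff (hlam : 0 < lam1 * lam2) (hA : 0 < A1 * A2)
    (h1 : sig1 ^ 2 * kap1 ^ 2 / lam1 = A1) (h2 : sig2 ^ 2 * kap2 ^ 2 / lam2 = A2) (C : ℝ) :
    (∃ rho ∈ Set.Icc (-1 : ℝ) 1,
      rho * (lam1 + lam2) * sig1 * sig2 * kap1 * kap2 / (lam1 * lam2) = C) ↔
    √(lam1 * lam2) / (lam1 + lam2) * C / √(A1 * A2) ∈ Set.Icc (-1 : ℝ) 1 := by
  have hpos : 0 < √(lam1 * lam2) * √(A1 * A2) :=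
    mul_pos (Real.sqrt_pos.2 hlam) (Real.sqrt_pos.2 hA)
  have hunit : |sig1 * sig2 * kap1 * kap2 / (√(lam1 * lam2) * √(A1 * A2))| = 1 := by
    rw [abs_div, abs_volatility_mul_eq_sqrt_mul_sqrt hlam h1 h2, abs_of_pos hpos,
      div_self hpos.ne']
  rw [← exists_mem_Icc_mul_eq_iff hunit]
  simp only [← cross_term_eq_iff hlam hA, mul_assoc]

end CrossTerm

theorem key_system_solvable_general (lam1 lam2 kap1 kap2 th1 th2 A1 A2 C W1 W2 : ℝ)
    (hlam : 0 < lam1 * lam2) (hkap1 : kap1 ≠ 0) (hkap2 : kap2 ≠ 0)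
    (hA1 : 0 < lam1 * A1) (hA2 : 0 < lam2 * A2) :
    (∃ sig1 sig2 rho z1 z2 : ℝ,
      0 ≤ sig1 ∧ 0 ≤ sig2 ∧ rho ∈ Set.Icc (-1 : ℝ) 1 ∧
      sig1 ^ 2 * kap1 ^ 2 / lam1 = A1 ∧
      sig2 ^ 2 * kap2 ^ 2 / lam2 = A2 ∧
      rho * (lam1 + lam2) * sig1 * sig2 * kap1 * kap2 / (lam1 * lam2) = C ∧
      kap1 * lam1 * (th1 - z1) - sig1 ^ 2 * kap1 ^ 2 / lam1 -
        rho * lam1 * sig1 * sig2 * kap1 * kap2 / (lam1 * lam2) = W1 ∧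
      kap2 * lam2 * (th2 - z2) - sig2 ^ 2 * kap2 ^ 2 / lam2 -
        rho * lam2 * sig1 * sig2 * kap1 * kap2 / (lam1 * lam2) = W2) ↔
    Real.sqrt (lam1 * lam2) / (lam1 + lam2) * C / Real.sqrt (A1 * A2) ∈
      Set.Icc (-1 : ℝ) 1 := by
  have hlam1 : lam1 ≠ 0 := left_ne_zero_of_mul hlam.ne'
  have hlam2 : lam2 ≠ 0 := right_ne_zero_of_mul hlam.ne'
  have hA : 0 < A1 * A2 := by
    refine (mul_pos_iff_of_pos_left hlam).1 ?_
    rw [mul_mul_mul_comm]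
    exact mul_pos hA1 hA2
  constructor
  · rintro ⟨sig1, sig2, rho, -, -, -, -, hrho, h1, h2, hC, -, -⟩
    exact (exists_correlation_iff hlam hA h1 h2 C).1 ⟨rho, hrho, hC⟩
  · intro hbound
    obtain ⟨sig1, hsig1, h1⟩ := exists_nonneg_sq_mul_sq_div_eq hlam1 hkap1 hA1.le
    obtain ⟨sig2, hsig2, h2⟩ := exists_nonneg_sq_mul_sq_div_eq hlam2 hkap2 hA2.le
    obtain ⟨rho, hrho, hC⟩ := (exists_correlation_iff hlam hA h1 h2 C).2 hbound
    obtain ⟨z1, hW1⟩ := exists_mul_sub_sub_sub_eq (mul_ne_zero hkap1 hlam1) th1 _ _ W1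
    obtain ⟨z2, hW2⟩ := exists_mul_sub_sub_sub_eq (mul_ne_zero hkap2 hlam2) th2 _ _ W2
    exact ⟨sig1, sig2, rho, z1, z2, hsig1, hsig2, hrho, h1, h2, hC, hW1, hW2⟩

/-- Solvability of the coefficient-matching system for the two-factor Vasicek
model: given targets `A₁, A₂ > 0` and `C, W₁, W₂ ∈ ℝ`, the system has a
solution `(σ₁, σ₂, ρ, z₁, z₂) ∈ [0,∞)² × [−1,1] × ℝ²` if and only if
`(√(λ₁λ₂)/(λ₁+λ₂))·C/√(A₁A₂) ∈ [−1,1]`. -/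
theorem key_system_solvable (lam1 lam2 kap1 kap2 th1 th2 A1 A2 C W1 W2 : ℝ)
    (h1 : 0 < lam1) (h2 : lam1 < lam2)
    (hkap1 : 0 < kap1) (hkap2 : 0 < kap2)
    (hA1 : 0 < A1) (hA2 : 0 < A2) :
    (∃ sig1 sig2 rho z1 z2 : ℝ,
      0 ≤ sig1 ∧ 0 ≤ sig2 ∧ rho ∈ Set.Icc (-1 : ℝ) 1 ∧
      sig1 ^ 2 * kap1 ^ 2 / lam1 = A1 ∧
      sig2 ^ 2 * kap2 ^ 2 / lam2 = A2 ∧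
      rho * (lam1 + lam2) * sig1 * sig2 * kap1 * kap2 / (lam1 * lam2) = C ∧
      kap1 * lam1 * (th1 - z1) - sig1 ^ 2 * kap1 ^ 2 / lam1 -
        rho * lam1 * sig1 * sig2 * kap1 * kap2 / (lam1 * lam2) = W1 ∧
      kap2 * lam2 * (th2 - z2) - sig2 ^ 2 * kap2 ^ 2 / lam2 -
        rho * lam2 * sig1 * sig2 * kap1 * kap2 / (lam1 * lam2) = W2) ↔
    Real.sqrt (lam1 * lam2) / (lam1 + lam2) * C / Real.sqrt (A1 * A2) ∈
      Set.Icc (-1 : ℝ) 1 := by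
  have hlam2 : 0 < lam2 := h1.trans h2
  exact key_system_solvable_general lam1 lam2 kap1 kap2 th1 th2 A1 A2 C W1 W2 (mul_pos h1 hlam2)
    hkap1.ne' hkap2.ne' (mul_pos h1 hA1) (mul_pos hlam2 hA2)
end

section
/- Let 0 < λ₁ < λ₂ < 2λ₁ and set (β₁, β₂, β₃, β₄) := (2λ₂, λ₁+λ₂, 2λ₁, λ₂). For 0 < r₁ < r₂ < r₃ and i ∈ {1,2,3,4}, define aᵢ(r) := (−1)^{1+i}·det M⁽ⁱ⁾, where M⁽ⁱ⁾ is the 3×3 matrix whose (k, l) entry is exp(−β_{j_l}·r_k) with j₁ < j₂ < j₃ the elements of {1,2,3,4}\{i} in increasing order. Then: (a) for every such r, (−1)^{1+i}·aᵢ(r) > 0 for each i (in particular a₁(r) > 0, a₂(r) < 0, a₃(r) > 0, a₄(r) < 0); and (b) there exists δ > 0 such that for all r with 0 < r₁ < r₂ < r₃ < δ, a₂(r)² < 4·a₁(r)·a₃(r). -/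
/-!
Remove the common factor `exp (-c * ∑ rₖ)` from a `3 × 3` determinant of exponentials with last
exponent `c`. The Laplace expansion along the resulting column of ones is the increment over the
rectangle `[r₀, r₁] × [r₁, r₂]` of the `2 × 2` minor `m p q x y = e^{-px - qy} - e^{-qx - py}`.
This minor is an eigenfunction of `∂²/∂x∂y` with eigenvalue `p * q`, so the mean value theorem for
mixed differences turns a linear combination of such determinants into a positive multiple of the
same combination of the `p * q * m p q` at a single point `x < y`.
Positivity of `m p q` for `q < p` gives the signs. For the discriminant, apply the same principle
to the quadratic `a₀ t² + a₁ t + a₂`, whose coefficients come from the minors `m p₁ p₂`, `m p₀ p₂`,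
`m p₀ p₁` with `pᵢ = βᵢ - β₃`: since `p₀, p₁, p₂` are equally spaced with step `d`,
`m p₀ p₂ ^ 2 = 4 cosh² (d (y - x) / 2) * m p₁ p₂ * m p₀ p₁`, and the strict inequality
`p₀ p₂ < p₁²` absorbs the factor `cosh²` as long as the nodes are close to one another.
-/

open Real Set Topology

section MixedDifference

/-- The increment of `G` over the rectangle `[a, b] × [c, d]`, i.e. its mixed second difference. -/
def rectIncrement (G : ℝ → ℝ → ℝ) (a b c d : ℝ) : ℝ :=
  G b d - G a d - G b c + G a c

lemma exists_rectIncrement_eq_mixed_deriv {G Gx Gxy : ℝ → ℝ → ℝ} {a b c d : ℝ}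
    (hab : a < b) (hcd : c < d)
    (hx : ∀ x ∈ Icc a b, ∀ y ∈ Icc c d, HasDerivAt (fun x => G x y) (Gx x y) x)
    (hxy : ∀ x ∈ Ioo a b, ∀ y ∈ Icc c d, HasDerivAt (Gx x) (Gxy x y) y) :
    ∃ ξ ∈ Ioo a b, ∃ η ∈ Ioo c d,
      rectIncrement G a b c d = (b - a) * (d - c) * Gxy ξ η := by
  have hdiff : ∀ x ∈ Icc a b, HasDerivAt (fun x => G x d - G x c) (Gx x d - Gx x c) x :=
    fun x hxab => (hx x hxab d (right_mem_Icc.2 hcd.le)).sub (hx x hxab c (left_mem_Icc.2 hcd.le))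
  obtain ⟨ξ, hξ, hslope_x⟩ := exists_hasDerivAt_eq_slope _ _ hab
    (fun x hxab => (hdiff x hxab).continuousAt.continuousWithinAt)
    (fun x hxab => hdiff x (Ioo_subset_Icc_self hxab))
  obtain ⟨η, hη, hslope_y⟩ := exists_hasDerivAt_eq_slope _ _ hcd
    (fun y hycd => (hxy ξ hξ y hycd).continuousAt.continuousWithinAt)
    (fun y hycd => hxy ξ hξ y (Ioo_subset_Icc_self hycd))
  refine ⟨ξ, hξ, η, hη, ?_⟩
  rw [eq_div_iff (sub_pos.2 hab).ne'] at hslope_x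
  rw [eq_div_iff (sub_pos.2 hcd).ne'] at hslope_y
  rw [rectIncrement]
  linear_combination -hslope_x - (b - a) * hslope_y

end MixedDifference

section ExpMinor

/-- The `2 × 2` minor of the kernel `(x, p) ↦ e^{-px}` with nodes `x, y` and exponents `p, q`. -/
noncomputable def expMinor (p q x y : ℝ) : ℝ :=
  exp (-(p * x)) * exp (-(q * y)) - exp (-(q * x)) * exp (-(p * y))

lemma expMinor_eq_exp_mul_sinh (p q x y : ℝ) :
    expMinor p q x y =
      2 * exp (-((p + q) * ((x + y) / 2))) * sinh ((p - q) * ((y - x) / 2)) := by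
  rw [expMinor, sinh_eq, mul_div_assoc', mul_assoc, mul_div_cancel_left₀ _ two_ne_zero, mul_sub]
  simp only [← exp_add]
  ring_nf

lemma expMinor_pos {p q x y : ℝ} (hpq : q < p) (hxy : x < y) : 0 < expMinor p q x y := by
  rw [expMinor_eq_exp_mul_sinh]
  exact mul_pos (mul_pos two_pos (exp_pos _))
    (sinh_pos_iff.2 (mul_pos (sub_pos.2 hpq) (half_pos (sub_pos.2 hxy))))

lemma expMinor_sq_of_add_eq_two_mul {p₀ p₁ p₂ : ℝ} (hmid : p₀ + p₂ = 2 * p₁) (x y : ℝ) :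
    expMinor p₀ p₂ x y ^ 2 =
      4 * cosh ((p₀ - p₁) * ((y - x) / 2)) ^ 2 * (expMinor p₁ p₂ x y * expMinor p₀ p₁ x y) := by
  obtain rfl : p₂ = 2 * p₁ - p₀ := by linarith
  have hexp : exp (-((p₀ + (2 * p₁ - p₀)) * ((x + y) / 2))) ^ 2 =
      exp (-((p₁ + (2 * p₁ - p₀)) * ((x + y) / 2))) * exp (-((p₀ + p₁) * ((x + y) / 2))) := by
    rw [sq, ← exp_add, ← exp_add]
    ring_nf
  have hsinh : sinh ((p₀ - (2 * p₁ - p₀)) * ((y - x) / 2)) =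
      2 * sinh ((p₀ - p₁) * ((y - x) / 2)) * cosh ((p₀ - p₁) * ((y - x) / 2)) := by
    rw [← sinh_two_mul]
    ring_nf
  have hstep : p₁ - (2 * p₁ - p₀) = p₀ - p₁ := by ring
  simp only [expMinor_eq_exp_mul_sinh, hsinh, hstep, mul_pow, hexp]
  ring

lemma exists_sum_rectIncrement_expMinor_eq {ι : Type*} [Fintype ι] (w p q : ι → ℝ)
    {a b c d : ℝ} (hab : a < b) (hcd : c < d) :
    ∃ ξ ∈ Ioo a b, ∃ η ∈ Ioo c d,
      ∑ i, w i * rectIncrement (expMinor (p i) (q i)) a b c d =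
        (b - a) * (d - c) * ∑ i, w i * (p i * q i * expMinor (p i) (q i) ξ η) := by
  have hexp (s x : ℝ) : HasDerivAt (fun x => exp (-(s * x))) (-s * exp (-(s * x))) x := by
    simpa [mul_comm] using ((hasDerivAt_id x).const_mul s).neg.exp
  obtain ⟨ξ, hξ, η, hη, h⟩ := exists_rectIncrement_eq_mixed_deriv
    (G := fun x y => ∑ i, w i * expMinor (p i) (q i) x y)
    (Gx := fun x y => ∑ i, w i * (-p i * exp (-(p i * x)) * exp (-(q i * y)) -
      -q i * exp (-(q i * x)) * exp (-(p i * y))))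
    (Gxy := fun x y => ∑ i, w i * (p i * q i * expMinor (p i) (q i) x y)) hab hcd
    (fun x _ y _ => HasDerivAt.fun_sum fun i _ =>
      (((hexp (p i) x).mul_const _).sub ((hexp (q i) x).mul_const _)).const_mul (w i))
    (fun x _ y _ => HasDerivAt.fun_sum fun i _ => by
      refine ((((hexp (q i) y).const_mul _).sub ((hexp (p i) y).const_mul _)).const_mul
        (w i)).congr_deriv ?_
      rw [expMinor]
      ring)
  refine ⟨ξ, hξ, η, hη, h ▸ ?_⟩
  simp only [rectIncrement, mul_add, mul_sub, Finset.sum_add_distrib, Finset.sum_sub_distrib]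

lemma rectIncrement_expMinor_pos {p q a b c : ℝ} (hq : 0 < q) (hpq : q < p)
    (hab : a < b) (hbc : b < c) : 0 < rectIncrement (expMinor p q) a b b c := by
  obtain ⟨ξ, hξ, η, hη, h⟩ :=
    exists_sum_rectIncrement_expMinor_eq (fun _ : Unit => 1) (fun _ => p) (fun _ => q) hab hbc
  simp only [Finset.univ_unique, Finset.sum_singleton, one_mul] at h
  rw [h]
  exact mul_pos (mul_pos (sub_pos.2 hab) (sub_pos.2 hbc))
    (mul_pos (mul_pos (hq.trans hpq) hq) (expMinor_pos hpq (hξ.2.trans hη.1)))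

end ExpMinor

section ExpDet

/-- The generalized Vandermonde determinant of the kernel `(x, p) ↦ e^{-px}` with exponents `b`
(columns) and nodes `r` (rows). -/
noncomputable def expDet {n : ℕ} (b r : Fin n → ℝ) : ℝ :=
  (Matrix.of fun k l => exp (-(b l * r k))).det

lemma expDet_eq_exp_mul_expDet_sub {n : ℕ} (b r : Fin n → ℝ) (c : ℝ) :
    expDet b r = exp (-(c * ∑ k, r k)) * expDet (fun l => b l - c) r := by
  have hprod : exp (-(c * ∑ k, r k)) = ∏ k, exp (-(c * r k)) := by
    rw [← exp_sum, Finset.mul_sum, Finset.sum_neg_distrib]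
  rw [hprod, expDet, expDet, ← Matrix.det_mul_column]
  congr 1
  ext k l
  simp only [Matrix.of_apply, ← exp_add]
  ring_nf

lemma expDet_fin_three (b r : Fin 3 → ℝ) :
    expDet b r = exp (-(b 2 * ∑ k, r k)) *
      rectIncrement (expMinor (b 0 - b 2) (b 1 - b 2)) (r 0) (r 1) (r 1) (r 2) := by
  rw [expDet_eq_exp_mul_expDet_sub b r (b 2), expDet, Matrix.det_fin_three]
  simp only [Matrix.of_apply, sub_self, zero_mul, neg_zero, exp_zero, rectIncrement, expMinor]
  ring

lemma expDet_pos_of_strictAnti {b r : Fin 3 → ℝ} (hb : StrictAnti b) (hr : StrictMono r) :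
    0 < expDet b r := by
  rw [expDet_fin_three]
  exact mul_pos (exp_pos _) (rectIncrement_expMinor_pos (sub_pos.2 (hb (by decide)))
    (sub_lt_sub_right (hb (by decide)) _) (hr (by decide)) (hr (by decide)))

end ExpDet

section Discriminant

lemma quadratic_pos_of_discrim_neg {K : Type*} [Field K] [LinearOrder K] [IsStrictOrderedRing K]
    {A B C : K} (hA : 0 < A) (hdisc : discrim A B C < 0) (t : K) :
    0 < A * (t * t) + B * t + C := by
  have hsq : 4 * A * (A * (t * t) + B * t + C) = (2 * A * t + B) ^ 2 - discrim A B C := by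
    rw [discrim]
    ring
  refine pos_of_mul_pos_right (hsq ▸ ?_) (by positivity : 0 ≤ 4 * A)
  exact sub_pos.2 (hdisc.trans_le (sq_nonneg _))

variable {p₀ p₁ p₂ : ℝ}

lemma discrim_expMinor_neg (hmid : p₀ + p₂ = 2 * p₁) (hp₂ : 0 < p₂) (hp : p₂ < p₁) {x y : ℝ}
    (hxy : x < y) (hcosh : p₀ * p₂ * cosh ((p₀ - p₁) * ((y - x) / 2)) ^ 2 < p₁ ^ 2) :
    discrim (p₁ * p₂ * expMinor p₁ p₂ x y) (-(p₀ * p₂ * expMinor p₀ p₂ x y))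
      (p₀ * p₁ * expMinor p₀ p₁ x y) < 0 := by
  have hp₀₁ : p₁ < p₀ := by linarith
  have hp₁ : 0 < p₁ := hp₂.trans hp
  have hfactor : 0 < 4 * (p₀ * p₂) * (expMinor p₁ p₂ x y * expMinor p₀ p₁ x y) :=
    mul_pos (mul_pos four_pos (mul_pos (hp₁.trans hp₀₁) hp₂))
      (mul_pos (expMinor_pos hp hxy) (expMinor_pos hp₀₁ hxy))
  calc
    _ = 4 * (p₀ * p₂) * (expMinor p₁ p₂ x y * expMinor p₀ p₁ x y) *
        (p₀ * p₂ * cosh ((p₀ - p₁) * ((y - x) / 2)) ^ 2 - p₁ ^ 2) := by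
      rw [discrim, neg_sq, mul_pow, expMinor_sq_of_add_eq_two_mul hmid]
      ring
    _ < 0 := mul_neg_of_pos_of_neg hfactor (sub_neg.2 hcosh)

lemma discrim_rectIncrement_expMinor_neg (hmid : p₀ + p₂ = 2 * p₁) (hp₂ : 0 < p₂) (hp : p₂ < p₁)
    {a b c : ℝ} (hab : a < b) (hbc : b < c)
    (hcosh : p₀ * p₂ * cosh ((p₀ - p₁) * ((c - a) / 2)) ^ 2 < p₁ ^ 2) :
    discrim (rectIncrement (expMinor p₁ p₂) a b b c) (-rectIncrement (expMinor p₀ p₂) a b b c)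
      (rectIncrement (expMinor p₀ p₁) a b b c) < 0 := by
  have hp₀₁ : 0 < p₀ - p₁ := by linarith
  have hp₀ : 0 < p₀ := by linarith
  refine discrim_lt_zero (rectIncrement_expMinor_pos hp₂ hp hab hbc).ne' fun t => ?_
  obtain ⟨ξ, hξ, η, hη, h⟩ := exists_sum_rectIncrement_expMinor_eq
    ![t * t, -t, 1] ![p₁, p₀, p₀] ![p₂, p₂, p₁] hab hbc
  have hξη : ξ < η := hξ.2.trans hη.1
  have hcosh_le : cosh ((p₀ - p₁) * ((η - ξ) / 2)) ≤ cosh ((p₀ - p₁) * ((c - a) / 2)) := by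
    have hspread : (η - ξ) / 2 ≤ (c - a) / 2 := by linarith [hξ.1, hη.2]
    have hpos : 0 < (η - ξ) / 2 := half_pos (sub_pos.2 hξη)
    rw [cosh_le_cosh, abs_of_pos (mul_pos hp₀₁ hpos),
      abs_of_pos (mul_pos hp₀₁ (hpos.trans_le hspread))]
    gcongr
  have hquad := quadratic_pos_of_discrim_neg
    (mul_pos (mul_pos (hp₂.trans hp) hp₂) (expMinor_pos hp hξη))
    (discrim_expMinor_neg hmid hp₂ hp hξη (lt_of_le_of_lt (by gcongr) hcosh)) t
  simp only [Fin.sum_univ_three, Matrix.cons_val] at h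
  have hvol : 0 < (b - a) * (c - b) := mul_pos (sub_pos.2 hab) (sub_pos.2 hbc)
  linear_combination mul_pos hvol hquad - h

end Discriminant

section InterpCoeff

/-- The coefficient of `e^{-βᵢx}` in the exponential polynomial with exponents `β` that vanishes at
the nodes `r`, normalized as a cofactor of the exponential collocation matrix. -/
noncomputable def interpCoeff {n : ℕ} (β : Fin (n + 1) → ℝ) (r : Fin n → ℝ) (i : Fin (n + 1)) : ℝ :=
  (-1) ^ (i : ℕ) * expDet (fun l => β (i.succAbove l)) r

lemma neg_one_pow_mul_interpCoeff {n : ℕ} (β : Fin (n + 1) → ℝ) (r : Fin n → ℝ)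
    (i : Fin (n + 1)) :
    (-1) ^ (i : ℕ) * interpCoeff β r i = expDet (fun l => β (i.succAbove l)) r := by
  rw [interpCoeff, ← mul_assoc, ← mul_pow, neg_one_mul, neg_neg, one_pow, one_mul]

variable {β : Fin 4 → ℝ} {r : Fin 3 → ℝ}

lemma neg_one_pow_mul_interpCoeff_pos (hβ : StrictAnti β) (hr : StrictMono r) (i : Fin 4) :
    0 < (-1) ^ (i : ℕ) * interpCoeff β r i := by
  rw [neg_one_pow_mul_interpCoeff]
  exact expDet_pos_of_strictAnti (hβ.comp_strictMono (Fin.strictMono_succAbove i)) hr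

lemma interpCoeff_one_sq_lt (hβ : StrictAnti β) (hmid : β 0 + β 2 = 2 * β 1) (hr : StrictMono r)
    (hcosh : (β 0 - β 3) * (β 2 - β 3) * cosh ((β 0 - β 1) * ((r 2 - r 0) / 2)) ^ 2 <
      (β 1 - β 3) ^ 2) :
    interpCoeff β r 1 ^ 2 < 4 * interpCoeff β r 0 * interpCoeff β r 2 := by
  have hdisc := discrim_rectIncrement_expMinor_neg
    (p₀ := β 0 - β 3) (p₁ := β 1 - β 3) (p₂ := β 2 - β 3) (by linarith)
    (sub_pos.2 (hβ (by decide))) (sub_lt_sub_right (hβ (by decide)) _)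
    (hr (by decide : (0 : Fin 3) < 1)) (hr (by decide : (1 : Fin 3) < 2)) (by simpa using hcosh)
  have hcoeff₀ : interpCoeff β r 0 = exp (-(β 3 * ∑ k, r k)) *
      rectIncrement (expMinor (β 1 - β 3) (β 2 - β 3)) (r 0) (r 1) (r 1) (r 2) := by
    simp [interpCoeff, expDet_fin_three, Fin.succAbove]
  have hcoeff₁ : interpCoeff β r 1 = exp (-(β 3 * ∑ k, r k)) *
      -rectIncrement (expMinor (β 0 - β 3) (β 2 - β 3)) (r 0) (r 1) (r 1) (r 2) := by
    simp [interpCoeff, expDet_fin_three, Fin.succAbove]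
  have hcoeff₂ : interpCoeff β r 2 = exp (-(β 3 * ∑ k, r k)) *
      rectIncrement (expMinor (β 0 - β 3) (β 1 - β 3)) (r 0) (r 1) (r 1) (r 2) := by
    simp [interpCoeff, expDet_fin_three, Fin.succAbove]
  rw [discrim] at hdisc
  rw [hcoeff₀, hcoeff₁, hcoeff₂]
  linear_combination exp (-(β 3 * ∑ k, r k)) ^ 2 * hdisc

lemma exists_pos_forall_mul_cosh_sq_lt {A B : ℝ} (hAB : A < B) (k : ℝ) :
    ∃ δ > 0, ∀ s, |s| < δ → A * cosh (k * (s / 2)) ^ 2 < B := by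
  have hcont : Continuous fun s => A * cosh (k * (s / 2)) ^ 2 := by fun_prop
  have hev : ∀ᶠ s in 𝓝 0, A * cosh (k * (s / 2)) ^ 2 < B :=
    hcont.continuousAt.eventually_lt_const (by simpa using hAB)
  simpa [Metric.eventually_nhds_iff] using hev

end InterpCoeff

theorem interpolation_coefficients_prox_general {β : Fin 4 → ℝ} (hβ : StrictAnti β)
    (hmid : β 0 + β 2 = 2 * β 1) :
    (∀ r : Fin 3 → ℝ, StrictMono r → ∀ i : Fin 4, 0 < (-1 : ℝ) ^ (i : ℕ) * interpCoeff β r i) ∧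
    (∃ δ : ℝ, 0 < δ ∧ ∀ r : Fin 3 → ℝ, StrictMono r → r 2 - r 0 < δ →
      interpCoeff β r 1 ^ 2 < 4 * interpCoeff β r 0 * interpCoeff β r 2) := by
  refine ⟨fun r hr => neg_one_pow_mul_interpCoeff_pos hβ hr, ?_⟩
  have hstep : 0 < β 0 - β 1 := sub_pos.2 (hβ (by decide))
  have hprod : (β 0 - β 3) * (β 2 - β 3) < (β 1 - β 3) ^ 2 := by
    linear_combination sq_pos_of_pos hstep + (β 0 - β 3) * hmid
  obtain ⟨δ, hδ, hcosh⟩ := exists_pos_forall_mul_cosh_sq_lt hprod (β 0 - β 1)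
  refine ⟨δ, hδ, fun r hr hspread => interpCoeff_one_sq_lt hβ hmid hr (hcosh _ ?_)⟩
  rwa [abs_of_pos (sub_pos.2 (hr (by decide)))]

/-- Coefficients of the interpolating exponential polynomial for the Descartes
system `(e^{−2λ₂x}, e^{−(λ₁+λ₂)x}, e^{−2λ₁x}, e^{−λ₂x})` in the scale-proximal
case `λ₁ < λ₂ < 2λ₁`.  Here indices are zero-based: `a r i` corresponds to
`a_{i+1}(r) = (−1)^{1+(i+1)} det M^{(i+1)} = (−1)^i det M^{(i+1)}`, where the
columns of `M^{(i+1)}` use the exponents `β_j` for `j ≠ i` in increasing order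
(`Fin.succAbove`).  (a) The coefficients strictly alternate in sign starting
with `+`; (b) near the origin, `a₂(r)² < 4·a₁(r)·a₃(r)`. -/
theorem interpolation_coefficients_prox (lam1 lam2 : ℝ)
    (h1 : 0 < lam1) (h2 : lam1 < lam2) (h3 : lam2 < 2 * lam1)
    (β : Fin 4 → ℝ) (hβ : β = ![2 * lam2, lam1 + lam2, 2 * lam1, lam2])
    (a : (Fin 3 → ℝ) → Fin 4 → ℝ)
    (ha : ∀ (r : Fin 3 → ℝ) (i : Fin 4), a r i = (-1 : ℝ) ^ (i : ℕ) *
      (Matrix.of fun k l : Fin 3 =>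
        Real.exp (-(β (i.succAbove l) * r k))).det) :
    (∀ r : Fin 3 → ℝ, (∀ k, 0 < r k) → StrictMono r →
      ∀ i : Fin 4, 0 < (-1 : ℝ) ^ (i : ℕ) * a r i) ∧
    (∃ δ : ℝ, 0 < δ ∧ ∀ r : Fin 3 → ℝ, (∀ k, 0 < r k) → StrictMono r →
      (∀ k, r k < δ) → (a r 1) ^ 2 < 4 * a r 0 * a r 2) := by
  obtain rfl : a = interpCoeff β := funext fun r => funext fun i => ha r i
  have hanti : StrictAnti β := by
    have h21 : lam1 + lam2 < 2 * lam2 := by linarith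
    have h10 : 2 * lam1 < lam1 + lam2 := by linarith
    simp [hβ, h10, h21, h3]
  obtain ⟨hsign, δ, hδ, hdisc⟩ :=
    interpolation_coefficients_prox_general hanti (by simp only [hβ, Matrix.cons_val]; ring)
  exact ⟨fun r _ hr => hsign r hr, δ, hδ, fun r hpos hr hlt =>
    hdisc r hr (by linarith [hpos 0, hlt 2])⟩
end
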